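/- Suppose iH ∈ su(N) and there exists a symmetric unitary matrix S (S = Sᵀ, S*S = 1) with SH + Hᵀ S = 0. Then there exists a unitary T such that T H T* is skew-symmetric, i.e. (THT*)ᵀ = -(THT*). -/

import Mathlib

open Matrix

/-!
A symmetric unitary `S` has a unitary square root `T` that is a polynomial in `S`; polynomials in a
symmetric matrix are symmetric, so `S = T ^ 2 = Tᵀ * T`. In the coordinates given by `T` the
bilinear form of `S` becomes the standard one, and `S * H + Hᵀ * S = 0`, which says that `H` is
skew-adjoint for the form of `S`, becomes skew-symmetry of `T * H * T⁻¹ = T * H * Tᴴ`.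
-/

open Polynomial

theorem exists_polynomial_eval_pow_eq {K : Type*} [Field K] [IsAlgClosed K] {s : Set K}
    (hs : s.Finite) {k : ℕ} (hk : k ≠ 0) : ∃ p : K[X], ∀ z ∈ s, p.eval z ^ k = z := by
  classical
  choose root root_pow using fun z : K => IsAlgClosed.exists_pow_nat_eq z hk.pos
  refine ⟨Lagrange.interpolate hs.toFinset id root, fun z hz => ?_⟩
  have eval_eq : (Lagrange.interpolate hs.toFinset id root).eval z = root z :=
    Lagrange.eval_interpolate_at_node (v := id) root Function.injective_id.injOn
      (hs.mem_toFinset.2 hz)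
  rw [eval_eq, root_pow]

theorem mem_unitary_of_pow_mem_unitary {𝕜 : Type*} [RCLike 𝕜] {z : 𝕜} {k : ℕ} (hk : k ≠ 0)
    (hz : z ^ k ∈ unitary 𝕜) : z ∈ unitary 𝕜 := by
  have norm_pow_eq : ‖z‖ ^ k = 1 := by rw [← norm_pow, CStarRing.norm_of_mem_unitary hz]
  have norm_eq : ‖z‖ = 1 := (pow_eq_one_iff_of_nonneg (norm_nonneg z) hk).1 norm_pow_eq
  rw [Unitary.mem_iff_star_mul_self, RCLike.star_def, RCLike.conj_mul, norm_eq,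
    RCLike.ofReal_one, one_pow]

theorem exists_aeval_mem_unitary_pow_eq {A : Type*} [TopologicalSpace A] [Ring A] [StarRing A]
    [Algebra ℂ A] [ContinuousFunctionalCalculus ℂ A IsStarNormal] {u : A} (hu : u ∈ unitary A)
    (hfin : (spectrum ℂ u).Finite) {k : ℕ} (hk : k ≠ 0) :
    ∃ p : ℂ[X], aeval u p ∈ unitary A ∧ aeval u p ^ k = u := by
  have normal : IsStarNormal u := isStarNormal_of_mem_unitary hu
  obtain ⟨p, hp⟩ := exists_polynomial_eval_pow_eq hfin hk
  refine ⟨p, ?_, ?_⟩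
  · rw [← cfc_polynomial p u, cfc_unitary_iff p.eval u]
    intro z hz
    have eval_pow_mem : p.eval z ^ k ∈ unitary ℂ :=
      (hp z hz).symm ▸ spectrum_subset_unitary_of_mem_unitary hu hz
    exact Unitary.star_mul_self_of_mem (mem_unitary_of_pow_mem_unitary hk eval_pow_mem)
  · calc aeval u p ^ k = cfc (fun z => p.eval z ^ k) u := by rw [cfc_pow .., cfc_polynomial p u]
      _ = cfc id u := cfc_congr hp
      _ = u := cfc_id ℂ u

section

variable {n : Type*} [Fintype n] [DecidableEq n]

theorem isSymm_aeval {R α : Type*} [CommSemiring R] [CommSemiring α] [Algebra R α]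
    {A : Matrix n n α} (hA : A.IsSymm) (p : R[X]) : (aeval A p).IsSymm := by
  induction p using Polynomial.induction_on' with
  | add p q hp hq => simpa only [map_add] using hp.add hq
  | monomial k c => simpa only [aeval_monomial, ← Algebra.smul_def] using (hA.pow k).smul c

open scoped Matrix.Norms.L2Operator in
/-- **Hua's theorem** on symmetric unitary matrices. -/
theorem exists_mem_unitaryGroup_transpose_mul_self_eq {S : Matrix n n ℂ} (hS : S.IsSymm)
    (hSu : S ∈ unitaryGroup n ℂ) : ∃ T ∈ unitaryGroup n ℂ, Tᵀ * T = S := by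
  obtain ⟨p, mem_unitary, sq_eq⟩ :=
    exists_aeval_mem_unitary_pow_eq hSu S.finite_spectrum two_ne_zero
  refine ⟨aeval S p, mem_unitary, ?_⟩
  rw [isSymm_aeval hS p, ← sq, sq_eq]

theorem isSkewAdjoint_transpose_mul_self_iff {R : Type*} [CommRing R] {P : Matrix n n R}
    (hP : IsUnit P) (A : Matrix n n R) :
    (Pᵀ * P).IsSkewAdjoint A ↔ (P * A * P⁻¹)ᵀ = -(P * A * P⁻¹) := by
  simpa only [Matrix.IsSkewAdjoint, Matrix.IsAdjointPair, Matrix.mul_one, Matrix.one_mul,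
    Matrix.mul_neg, Matrix.neg_mul] using Matrix.isAdjointPair_equiv 1 A (-A) P hP

theorem conjugate_to_orthogonal_general {H S : Matrix n n ℂ} (hSsym : S.IsSymm)
    (hSu : S ∈ unitaryGroup n ℂ) (hS : S * H + Hᵀ * S = 0) :
    ∃ T ∈ unitaryGroup n ℂ, (T * H * Tᴴ)ᵀ = -(T * H * Tᴴ) := by
  obtain ⟨T, hT, rfl⟩ := exists_mem_unitaryGroup_transpose_mul_self_eq hSsym hSu
  have mul_conjTranspose : T * Tᴴ = 1 := mem_unitaryGroup_iff.1 hT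
  have skew : (Tᵀ * T).IsSkewAdjoint H := by
    rw [Matrix.IsSkewAdjoint, Matrix.IsAdjointPair, Matrix.mul_neg]
    exact eq_neg_of_add_eq_zero_right hS
  refine ⟨T, hT, ?_⟩
  rw [← inv_eq_right_inv mul_conjTranspose]
  exact (isSkewAdjoint_transpose_mul_self_iff (.of_mul_eq_one _ mul_conjTranspose) H).1 skew

end

/-- If `iH` is skew-Hermitian and there is a symmetric unitary `S` with `S H + Hᵀ S = 0`,
then `H` is unitarily conjugate to a skew-symmetric matrix. -/
theorem conjugate_to_orthogonal (N : ℕ) (H : Matrix (Fin N) (Fin N) ℂ)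
    (hH : (Complex.I • H)ᴴ = -(Complex.I • H))
    (S : Matrix (Fin N) (Fin N) ℂ)
    (hSsym : Sᵀ = S) (hSu : Sᴴ * S = 1) (hSu' : S * Sᴴ = 1)
    (hS : S * H + Hᵀ * S = 0) :
    ∃ T : Matrix (Fin N) (Fin N) ℂ,
      Tᴴ * T = 1 ∧ T * Tᴴ = 1 ∧ (T * H * Tᴴ)ᵀ = -(T * H * Tᴴ) := by
  obtain ⟨T, hT, skew⟩ := conjugate_to_orthogonal_general hSsym ⟨hSu, hSu'⟩ hS
  exact ⟨T, hT.1, hT.2, skew⟩
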